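/- arXiv:1703.01069 — 6 statements merged into one kernel-verified Lean document; each statement's English description precedes it below -/
import Mathlib

section
/- Let a : ℕ × ℕ → ℤ be the double sequence determined by the recurrence a_{l+1,m+1} = a_{l,m} + a_{l+1,m} + a_{l,m+1} for all l,m ≥ 0, with boundary values a_{0,0} = 1 and a_{l,0} = a_{0,m} = 0 for all l,m ≥ 1. Then the limit as m → ∞ of (1/m) · log(a_{m,m}) exists and equals log(3 + 2·√2), where log denotes the natural logarithm on the reals. -/
open Filter

/-!
With weight `q` on the diagonal term of the recurrence, `a (l + 1, m + 1)` is `q * a (0, 0)` times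
the weighted Delannoy number `D(l, m) = ∑ C(l, k) C(m, k) (1 + q) ^ k`. The central number `D(n, n)`
is therefore the sum of the squares of the `n + 1` terms `C(n, k) √(1 + q) ^ k`, whose plain sum is
`(1 + √(1 + q)) ^ n`. Comparing the sum of squares with the square of the sum (Cauchy–Schwarz in one
direction, nonnegativity of the terms in the other) pins `D(n, n)` to `(1 + √(1 + q)) ^ (2 n)` up to
a factor `n + 1`, which is invisible to the exponential growth rate.
-/

theorem sum_pow_mul_choose {R : Type*} [CommSemiring R] (x : R) (n : ℕ) :
    ∑ k ∈ Finset.range (n + 1), x ^ k * n.choose k = (1 + x) ^ n := by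
  simp [add_comm 1 x, add_pow]

section Delannoy

variable {R : Type*} [CommRing R]

/-- The weighted Delannoy number: the total weight of the lattice paths from `(0, 0)` to `(l, m)`
with steps `(1, 0)`, `(0, 1)` of weight `1` and `(1, 1)` of weight `q`. It is encoded by its closed
form; the recurrence over the last step is `delannoy_succ_succ`. -/
def delannoy (q : R) (l m : ℕ) : R :=
  ∑ k ∈ Finset.range (l + 1), l.choose k * m.choose k * (1 + q) ^ k

theorem delannoy_eq_one_add_sum (q : R) {l N : ℕ} (m : ℕ) (hN : l ≤ N) :
    delannoy q l m =
      1 + ∑ k ∈ Finset.range N, l.choose (k + 1) * m.choose (k + 1) * (1 + q) ^ (k + 1) := by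
  have hextend : delannoy q l m =
      ∑ k ∈ Finset.range (N + 1), l.choose k * m.choose k * (1 + q) ^ k := by
    refine Finset.sum_subset (Finset.range_mono (by lia)) fun k _ hk => ?_
    have hlk : l < k := by simpa using hk
    simp [Nat.choose_eq_zero_of_lt hlk]
  rw [hextend, Finset.sum_range_succ', add_comm]
  simp

@[simp]
theorem delannoy_zero_left (q : R) (m : ℕ) : delannoy q 0 m = 1 := by
  simp [delannoy]

@[simp]
theorem delannoy_zero_right (q : R) (l : ℕ) : delannoy q l 0 = 1 := by
  simp [delannoy, Finset.sum_range_succ']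

theorem delannoy_succ_succ (q : R) (l m : ℕ) :
    delannoy q (l + 1) (m + 1) =
      q * delannoy q l m + delannoy q (l + 1) m + delannoy q l (m + 1) := by
  have hshift : (1 + q) * delannoy q l m =
      ∑ k ∈ Finset.range (l + 1), l.choose k * m.choose k * (1 + q) ^ (k + 1) := by
    rw [delannoy, Finset.mul_sum]
    exact Finset.sum_congr rfl fun k _ => by ring
  have hpascal (k : ℕ) :
      ((l + 1).choose (k + 1) : R) * (m + 1).choose (k + 1) * (1 + q) ^ (k + 1) +
          l.choose (k + 1) * m.choose (k + 1) * (1 + q) ^ (k + 1) =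
        l.choose k * m.choose k * (1 + q) ^ (k + 1) +
          (l + 1).choose (k + 1) * m.choose (k + 1) * (1 + q) ^ (k + 1) +
          l.choose (k + 1) * (m + 1).choose (k + 1) * (1 + q) ^ (k + 1) := by
    simp only [Nat.choose_succ_succ', Nat.cast_add]
    ring
  have hsum := Finset.sum_congr (Eq.refl (Finset.range (l + 1))) fun k _ => hpascal k
  simp only [Finset.sum_add_distrib] at hsum
  linear_combination hsum - hshift +
    delannoy_eq_one_add_sum q (m + 1) (le_refl (l + 1)) -
    delannoy_eq_one_add_sum q m (le_refl (l + 1)) -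
    delannoy_eq_one_add_sum q (m + 1) l.le_succ +
    delannoy_eq_one_add_sum q m l.le_succ

theorem eq_mul_delannoy_of_recurrence {q : R} {a : ℕ × ℕ → R}
    (hrec : ∀ l m, a (l + 1, m + 1) = q * a (l, m) + a (l + 1, m) + a (l, m + 1))
    (hl0 : ∀ l, a (l + 1, 0) = 0) (h0m : ∀ m, a (0, m + 1) = 0) (l m : ℕ) :
    a (l + 1, m + 1) = q * a (0, 0) * delannoy q l m := by
  induction l generalizing m with
  | zero =>
    induction m with
    | zero => simp [hrec, hl0, h0m]
    | succ m ihm => rw [hrec, ihm]; simp [h0m]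
  | succ l ihl =>
    induction m with
    | zero => rw [hrec, ihl]; simp [hl0]
    | succ m ihm => rw [hrec, ihl, ihl, ihm, delannoy_succ_succ]; ring

end Delannoy

section CentralDelannoy

variable {q : ℝ}

theorem delannoy_self_eq_sum_sq (hq : -1 ≤ q) (n : ℕ) :
    delannoy q n n = ∑ k ∈ Finset.range (n + 1), (√(1 + q) ^ k * n.choose k) ^ 2 := by
  refine Finset.sum_congr rfl fun k _ => ?_
  rw [mul_pow, pow_right_comm, Real.sq_sqrt (by linarith)]
  ring

theorem delannoy_self_le (hq : -1 ≤ q) (n : ℕ) :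
    delannoy q n n ≤ ((1 + √(1 + q)) ^ 2) ^ n := by
  rw [delannoy_self_eq_sum_sq hq, pow_right_comm, ← sum_pow_mul_choose]
  exact Finset.sum_sq_le_sq_sum_of_nonneg fun k _ => by positivity

theorem le_mul_delannoy_self (hq : -1 ≤ q) (n : ℕ) :
    ((1 + √(1 + q)) ^ 2) ^ n ≤ (n + 1) * delannoy q n n := by
  rw [delannoy_self_eq_sum_sq hq, pow_right_comm, ← sum_pow_mul_choose]
  simpa using sq_sum_le_card_mul_sum_sq (s := Finset.range (n + 1))
    (f := fun k => √(1 + q) ^ k * (n.choose k : ℝ))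

end CentralDelannoy

theorem tendsto_one_div_mul_log_of_pow_bounds {u : ℕ → ℝ} {c C r : ℝ} (hc : 0 < c) (hr : 0 < r)
    (hlower : ∀ᶠ n : ℕ in atTop, c * r ^ n ≤ n * u n) (hupper : ∀ᶠ n in atTop, u n ≤ C * r ^ n) :
    Tendsto (fun n : ℕ => 1 / (n : ℝ) * Real.log (u n)) atTop (nhds (Real.log r)) := by
  have hconst (x : ℝ) :
      Tendsto (fun n : ℕ => Real.log x / n + Real.log r) atTop (nhds (Real.log r)) := by
    simpa using (tendsto_const_div_atTop_nhds_zero_nat (Real.log x)).add_const (Real.log r)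
  have hlog : Tendsto (fun n : ℕ => Real.log n / n) atTop (nhds 0) :=
    Real.isLittleO_log_id_atTop.tendsto_div_nhds_zero.comp tendsto_natCast_atTop_atTop
  have hlower_tendsto : Tendsto (fun n : ℕ => Real.log c / n + Real.log r - Real.log n / n)
      atTop (nhds (Real.log r)) := by
    simpa using (hconst c).sub hlog
  have hpos : ∀ᶠ n : ℕ in atTop, 0 < (n : ℝ) ∧ 0 < u n := by
    filter_upwards [hlower, eventually_gt_atTop 0] with n hn hn0
    have hn_pos : 0 < (n : ℝ) := Nat.cast_pos.mpr hn0
    exact ⟨hn_pos, pos_of_mul_pos_right ((mul_pos hc (pow_pos hr n)).trans_le hn) hn_pos.le⟩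
  refine tendsto_of_tendsto_of_tendsto_of_le_of_le' hlower_tendsto (hconst C) ?_ ?_
  · filter_upwards [hlower, hpos] with n hn ⟨hn0, hun⟩
    have hle : Real.log c + n * Real.log r ≤ Real.log n + Real.log (u n) := by
      rw [← Real.log_pow, ← Real.log_mul hc.ne' (pow_pos hr n).ne',
        ← Real.log_mul hn0.ne' hun.ne']
      exact Real.log_le_log (by positivity) hn
    field_simp
    linarith
  · filter_upwards [hupper, hpos] with n hn ⟨hn0, hun⟩
    have hC : 0 < C := pos_of_mul_pos_left (hun.trans_le hn) (pow_pos hr n).le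
    have hle : Real.log (u n) ≤ Real.log C + n * Real.log r := by
      rw [← Real.log_pow, ← Real.log_mul hC.ne' (pow_pos hr n).ne']
      exact Real.log_le_log hun hn
    field_simp
    linarith

theorem stmt4_general {q : ℝ} (hq : 0 < q) (a : ℕ × ℕ → ℝ)
    (hrec : ∀ l m : ℕ, a (l + 1, m + 1) = q * a (l, m) + a (l + 1, m) + a (l, m + 1))
    (h00 : 0 < a (0, 0)) (hl0 : ∀ l : ℕ, a (l + 1, 0) = 0) (h0m : ∀ m : ℕ, a (0, m + 1) = 0) :
    Tendsto (fun m : ℕ => 1 / (m : ℝ) * Real.log (a (m, m))) atTop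
      (nhds (Real.log ((1 + √(1 + q)) ^ 2))) := by
  have hq' : -1 ≤ q := by linarith
  have hdiag (n : ℕ) : a (n + 1, n + 1) = q * a (0, 0) * delannoy q n n :=
    eq_mul_delannoy_of_recurrence hrec hl0 h0m n n
  set r := (1 + √(1 + q)) ^ 2
  have hr0 : 0 < r := by positivity
  have hscale (n : ℕ) : q * a (0, 0) / r * r ^ (n + 1) = q * a (0, 0) * r ^ n := by
    rw [pow_succ', ← mul_assoc, div_mul_cancel₀ _ hr0.ne']
  apply tendsto_one_div_mul_log_of_pow_bounds (c := q * a (0, 0) / r) (C := q * a (0, 0) / r)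
    (by positivity) hr0 <;> rw [← map_add_atTop_eq_nat 1, eventually_map]
  · refine .of_forall fun n => ?_
    rw [hscale, hdiag, mul_left_comm, Nat.cast_add_one]
    gcongr
    exact le_mul_delannoy_self hq' n
  · refine .of_forall fun n => ?_
    rw [hscale, hdiag]
    gcongr
    exact delannoy_self_le hq' n

/-- For the double sequence with `a_{l+1,m+1} = a_{l,m} + a_{l+1,m} + a_{l,m+1}`,
`a_{0,0} = 1`, and `a_{l,0} = a_{0,m} = 0` for `l,m ≥ 1`, the limit as `m → ∞` of
`(1/m)·log a_{m,m}` exists and equals `log (3 + 2√2)`. -/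
theorem stmt4 (a : ℕ × ℕ → ℤ)
    (hrec : ∀ l m : ℕ, a (l + 1, m + 1) = a (l, m) + a (l + 1, m) + a (l, m + 1))
    (h00 : a (0, 0) = 1)
    (hl0 : ∀ l : ℕ, 1 ≤ l → a (l, 0) = 0)
    (h0m : ∀ m : ℕ, 1 ≤ m → a (0, m) = 0) :
    Tendsto (fun m : ℕ => (1 / (m : ℝ)) * Real.log ((a (m, m) : ℝ)))
      atTop (nhds (Real.log (3 + 2 * Real.sqrt 2))) := by
  have hsq : (1 + √(1 + 1)) ^ 2 = 3 + 2 * √2 := by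
    rw [one_add_one_eq_two, add_sq, Real.sq_sqrt zero_le_two]; ring
  rw [← hsq]
  exact stmt4_general one_pos (fun p => (a p : ℝ)) (by simp [hrec]) (by simp [h00])
    (by simp [hl0]) (by simp [h0m])
end

section
/- Let d̄ : ℕ × ℕ → ℤ satisfy the master degree equation d̄_{l+1,m+1} = d̄_{l+1,m} + d̄_{l,m+1} + d̄_{l-1,m-1} - d̄_{l,m-1} - d̄_{l-1,m} for all l,m ≥ 1, and define v_{l,m} := d̄_{l+1,m+1} - d̄_{l,m} for all l,m ≥ 0. Then v_{l,m} = v_{l,0} + v_{0,m} - v_{0,0} for all l,m ≥ 0. -/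
/-!
The master degree equation, with its terms regrouped along diagonals, says exactly that the mixed
second difference of `v` vanishes. Summing that difference over the rectangle with opposite corners
`(0, 0)` and `(l, m)` telescopes to `v (l, m) - v (l, 0) - v (0, m) + v (0, 0) = 0`.
-/

section

variable {G : Type*} [AddCommGroup G]

theorem sub_apply_zero_eq_of_forall_succ_sub_eq {a b : ℕ → G}
    (h : ∀ n, a (n + 1) - a n = b (n + 1) - b n) (n : ℕ) : a n - a 0 = b n - b 0 :=
  calc
    a n - a 0 = ∑ i ∈ Finset.range n, (a (i + 1) - a i) := (Finset.sum_range_sub a n).symm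
    _ = ∑ i ∈ Finset.range n, (b (i + 1) - b i) := Finset.sum_congr rfl fun i _ => h i
    _ = b n - b 0 := Finset.sum_range_sub b n

theorem eq_add_sub_of_mixed_difference_eq_zero {f : ℕ × ℕ → G}
    (h : ∀ l m, f (l + 1, m + 1) - f (l + 1, m) - (f (l, m + 1) - f (l, m)) = 0) (l m : ℕ) :
    f (l, m) = f (l, 0) + f (0, m) - f (0, 0) := by
  have row_sub (i : ℕ) : f (i + 1, m) - f (i + 1, 0) = f (i, m) - f (i, 0) :=
    sub_apply_zero_eq_of_forall_succ_sub_eq (a := fun j => f (i + 1, j)) (b := fun j => f (i, j))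
      (fun j => sub_eq_zero.mp (h i j)) m
  have column_sub : f (l, m) - f (0, m) = f (l, 0) - f (0, 0) :=
    sub_apply_zero_eq_of_forall_succ_sub_eq (a := fun i => f (i, m)) (b := fun i => f (i, 0))
      (fun i => sub_eq_sub_iff_sub_eq_sub.mp (row_sub i)) l
  rw [eq_add_of_sub_eq column_sub, sub_add_eq_add_sub]

theorem mixed_difference_eq_zero_of_master_degree {d v : ℕ × ℕ → G}
    (hd : ∀ l m, d (l + 2, m + 2) =
      d (l + 2, m + 1) + d (l + 1, m + 2) + d (l, m) - d (l + 1, m) - d (l, m + 1))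
    (hv : ∀ l m, v (l, m) = d (l + 1, m + 1) - d (l, m)) (l m : ℕ) :
    v (l + 1, m + 1) - v (l + 1, m) - (v (l, m + 1) - v (l, m)) = 0 := by
  simp only [hv, add_assoc, Nat.reduceAdd, hd l m]
  abel

theorem stmt6_general (d : ℕ × ℕ → G)
    (hd : ∀ l m, d (l + 2, m + 2) =
      d (l + 2, m + 1) + d (l + 1, m + 2) + d (l, m) - d (l + 1, m) - d (l, m + 1))
    (v : ℕ × ℕ → G) (hv : ∀ l m, v (l, m) = d (l + 1, m + 1) - d (l, m)) (l m : ℕ) :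
    v (l, m) = v (l, 0) + v (0, m) - v (0, 0) :=
  eq_add_sub_of_mixed_difference_eq_zero (mixed_difference_eq_zero_of_master_degree hd hv) l m

end

/-- If `d̄` satisfies the master degree equation
`d̄_{l+1,m+1} = d̄_{l+1,m} + d̄_{l,m+1} + d̄_{l-1,m-1} - d̄_{l,m-1} - d̄_{l-1,m}` for all
`l,m ≥ 1` (stated with indices shifted by one to stay in `ℕ`), and
`v_{l,m} := d̄_{l+1,m+1} - d̄_{l,m}`, then `v_{l,m} = v_{l,0} + v_{0,m} - v_{0,0}`
for all `l,m ≥ 0`. -/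
theorem stmt6 (db : ℕ × ℕ → ℤ)
    (hrec : ∀ l m : ℕ, db (l + 2, m + 2) =
      db (l + 2, m + 1) + db (l + 1, m + 2) + db (l, m) - db (l + 1, m) - db (l, m + 1))
    (v : ℕ × ℕ → ℤ)
    (hv : ∀ l m : ℕ, v (l, m) = db (l + 1, m + 1) - db (l, m)) :
    ∀ l m : ℕ, v (l, m) = v (l, 0) + v (0, m) - v (0, 0) :=
  stmt6_general db hrec v hv
end

section
/- Let d̄ : ℕ × ℕ → ℤ satisfy the master degree equation d̄_{l+1,m+1} = d̄_{l+1,m} + d̄_{l,m+1} + d̄_{l-1,m-1} - d̄_{l,m-1} - d̄_{l-1,m} for all l,m ≥ 1, and suppose d̄_{l,m} ≥ 1 for all l,m. Suppose there exist a real constant C > 0 and a natural number D such that |d̄_{1,m+1} - d̄_{0,m}| ≤ C·(m+1)^D for all m ≥ 0 and |d̄_{l+1,1} - d̄_{l,0}| ≤ C·(l+1)^D for all l ≥ 0. Then for each fixed m₀ ≥ 0 there is a constant C' > 0 such that d̄_{l, l+m₀} ≤ C'·(l+1)^{D+1} for all l ≥ 0, and consequently lim_{l→∞} log(d̄_{l,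 m₀+l})/l = 0. -/
open Filter

/-!
The diagonal difference `e_{l,m} = d̄_{l+1,m+1} - d̄_{l,m}` turns the master degree equation into
the discrete wave equation `e_{l+1,m+1} = e_{l+1,m} + e_{l,m+1} - e_{l,m}`, whose solutions split
as `e_{l,m} = e_{l,0} + e_{0,m} - e_{0,0}`. Polynomial bounds of degree `D` on the boundary values
of `e` thus hold along every diagonal, and summing them raises the degree by one.
-/

section AddCommGroup

variable {G : Type*} [AddCommGroup G]

/-- The master degree equation for `d : ℕ × ℕ → G`, with both indices shifted by one so that it
ranges over all of `ℕ × ℕ` and involves no truncated subtraction. -/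
def SatisfiesMasterDegreeEq (d : ℕ × ℕ → G) : Prop :=
  ∀ l m : ℕ, d (l + 2, m + 2) =
    d (l + 2, m + 1) + d (l + 1, m + 2) + d (l, m) - d (l + 1, m) - d (l, m + 1)

/-- The diagonal difference `d_{l+1,m+1} - d_{l,m}` of a lattice function `d`, in terms of which the
master degree equation becomes a discrete wave equation. -/
def diagDiff (d : ℕ × ℕ → G) (l m : ℕ) : G :=
  d (l + 1, m + 1) - d (l, m)

theorem eq_add_sub_of_discrete_wave {e : ℕ → ℕ → G}
    (he : ∀ l m, e (l + 1) (m + 1) = e (l + 1) m + e l (m + 1) - e l m) (l m : ℕ) :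
    e l m = e l 0 + e 0 m - e 0 0 := by
  induction l generalizing m with
  | zero => abel
  | succ l ihl =>
    induction m with
    | zero => abel
    | succ m ihm =>
      rw [he, ihm, ihl (m + 1), ihl m]
      abel

theorem SatisfiesMasterDegreeEq.diagDiff_succ_succ {d : ℕ × ℕ → G}
    (hd : SatisfiesMasterDegreeEq d) (l m : ℕ) :
    diagDiff d (l + 1) (m + 1) = diagDiff d (l + 1) m + diagDiff d l (m + 1) - diagDiff d l m := by
  simp only [diagDiff, add_assoc, Nat.reduceAdd, hd l m]
  abel

theorem SatisfiesMasterDegreeEq.diagDiff_eq {d : ℕ × ℕ → G}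
    (hd : SatisfiesMasterDegreeEq d) (l m : ℕ) :
    diagDiff d l m = diagDiff d l 0 + diagDiff d 0 m - diagDiff d 0 0 :=
  eq_add_sub_of_discrete_wave hd.diagDiff_succ_succ l m

end AddCommGroup

section OrderedRing

variable {R : Type*} [CommRing R] [LinearOrder R] [IsStrictOrderedRing R]

theorem le_add_mul_pow_of_succ_sub_le {u : ℕ → R} {K : R} {D : ℕ} (hK : 0 ≤ K)
    (hu : ∀ l : ℕ, u (l + 1) - u l ≤ K * (l + 1) ^ D) (l : ℕ) :
    u l ≤ u 0 + K * l ^ (D + 1) := by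
  have increment_le : ∀ i ∈ Finset.range l, u (i + 1) - u i ≤ K * l ^ D := fun i hi => by
    have hil : (i : R) + 1 ≤ l := by exact_mod_cast Finset.mem_range.mp hi
    exact (hu i).trans (by gcongr)
  have sum_le := Finset.sum_le_card_nsmul _ _ _ increment_le
  rw [Finset.sum_range_sub, Finset.card_range, nsmul_eq_mul, sub_le_iff_le_add'] at sum_le
  exact sum_le.trans_eq (by ring)

theorem add_add_one_pow_le_mul_pow {x y : R} (hx : 0 ≤ x) (hy : 0 ≤ y) (n : ℕ) :
    (x + y + 1) ^ n ≤ (x + 1) ^ n * (y + 1) ^ n := by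
  rw [← mul_pow]
  have hxy : 0 ≤ x * y := mul_nonneg hx hy
  gcongr
  linarith

theorem SatisfiesMasterDegreeEq.diagDiff_diag_le {d : ℕ × ℕ → R}
    (hd : SatisfiesMasterDegreeEq d) {C : R} {D : ℕ} (hC : 0 ≤ C)
    (hleft : ∀ m : ℕ, diagDiff d 0 m ≤ C * (m + 1) ^ D)
    (hbot : ∀ l : ℕ, diagDiff d l 0 ≤ C * (l + 1) ^ D) (m₀ l : ℕ) :
    diagDiff d l (l + m₀) ≤ (C + C * (m₀ + 1) ^ D + |diagDiff d 0 0|) * (l + 1) ^ D := by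
  have left_le : diagDiff d 0 (l + m₀) ≤ C * ((l + 1) ^ D * (m₀ + 1) ^ D) := by
    refine (hleft (l + m₀)).trans ?_
    push_cast
    gcongr
    exact add_add_one_pow_le_mul_pow l.cast_nonneg m₀.cast_nonneg D
  have corner_le : -diagDiff d 0 0 ≤ |diagDiff d 0 0| * ((l : R) + 1) ^ D :=
    (neg_le_abs _).trans <| le_mul_of_one_le_right (abs_nonneg _) <|
      one_le_pow₀ (le_add_of_nonneg_left l.cast_nonneg)
  calc diagDiff d l (l + m₀)
      = diagDiff d l 0 + diagDiff d 0 (l + m₀) + -diagDiff d 0 0 := by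
        rw [hd.diagDiff_eq, sub_eq_add_neg]
    _ ≤ C * (l + 1) ^ D + C * ((l + 1) ^ D * (m₀ + 1) ^ D)
          + |diagDiff d 0 0| * (l + 1) ^ D :=
        add_le_add (add_le_add (hbot l) left_le) corner_le
    _ = (C + C * (m₀ + 1) ^ D + |diagDiff d 0 0|) * (l + 1) ^ D := by ring

theorem SatisfiesMasterDegreeEq.exists_diag_le_add_mul_pow {d : ℕ × ℕ → R}
    (hd : SatisfiesMasterDegreeEq d) {C : R} {D : ℕ} (hC : 0 ≤ C)
    (hleft : ∀ m : ℕ, diagDiff d 0 m ≤ C * (m + 1) ^ D)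
    (hbot : ∀ l : ℕ, diagDiff d l 0 ≤ C * (l + 1) ^ D) (m₀ : ℕ) :
    ∃ K : R, 0 ≤ K ∧ ∀ l : ℕ, d (l, l + m₀) ≤ d (0, m₀) + K * l ^ (D + 1) := by
  have hK : 0 ≤ C + C * ((m₀ : R) + 1) ^ D + |diagDiff d 0 0| := by positivity
  have increment_le := hd.diagDiff_diag_le hC hleft hbot m₀
  simp only [diagDiff, Nat.add_right_comm _ m₀ 1] at increment_le
  refine ⟨_, hK, fun l => ?_⟩
  simpa only [zero_add] using
    le_add_mul_pow_of_succ_sub_le (u := fun l => d (l, l + m₀)) hK increment_le l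

end OrderedRing

theorem tendsto_log_natCast_add_one_div_natCast :
    Tendsto (fun n : ℕ => Real.log (n + 1) / n) atTop (nhds 0) := by
  have h := (Real.tendsto_pow_log_div_mul_add_atTop 1 (-1) 1 one_ne_zero).comp
    (tendsto_natCast_atTop_atTop.comp (tendsto_add_atTop_nat 1))
  simpa [Function.comp_def] using h

theorem tendsto_log_div_natCast_of_le_mul_pow {u : ℕ → ℝ} {a A : ℝ} {k : ℕ} (ha : 0 < a)
    (hlower : ∀ n, a ≤ u n) (hupper : ∀ n : ℕ, u n ≤ A * (n + 1) ^ k) :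
    Tendsto (fun n : ℕ => Real.log (u n) / n) atTop (nhds 0) := by
  have hA : 0 < A := by simpa using ha.trans_le ((hlower 0).trans (hupper 0))
  have log_le (n : ℕ) : Real.log (u n) ≤ Real.log A + k * Real.log (n + 1) := by
    rw [← Real.log_pow, ← Real.log_mul hA.ne' (by positivity)]
    exact Real.log_le_log (ha.trans_le (hlower n)) (hupper n)
  have lower_tendsto : Tendsto (fun n : ℕ => Real.log a / n) atTop (nhds 0) :=
    tendsto_const_div_atTop_nhds_zero_nat _
  have upper_tendsto :
      Tendsto (fun n : ℕ => (Real.log A + k * Real.log (n + 1)) / n) atTop (nhds 0) := by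
    simpa [add_div, mul_div_assoc] using (tendsto_const_div_atTop_nhds_zero_nat (Real.log A)).add
      (tendsto_log_natCast_add_one_div_natCast.const_mul (k : ℝ))
  refine tendsto_of_tendsto_of_tendsto_of_le_of_le lower_tendsto upper_tendsto
    (fun n => ?_) (fun n => ?_)
  · exact div_le_div_of_nonneg_right (Real.log_le_log ha (hlower n)) n.cast_nonneg
  · exact div_le_div_of_nonneg_right (log_le n) n.cast_nonneg

theorem stmt7_general {d : ℕ × ℕ → ℝ} (hd : SatisfiesMasterDegreeEq d) {C : ℝ} {D : ℕ}
    (hC : 0 ≤ C) (hleft : ∀ m : ℕ, diagDiff d 0 m ≤ C * (m + 1) ^ D)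
    (hbot : ∀ l : ℕ, diagDiff d l 0 ≤ C * (l + 1) ^ D) {m₀ : ℕ} {a : ℝ} (ha : 0 < a)
    (hlower : ∀ l : ℕ, a ≤ d (l, l + m₀)) :
    (∃ C' : ℝ, 0 < C' ∧ ∀ l : ℕ, d (l, l + m₀) ≤ C' * (l + 1) ^ (D + 1)) ∧
      Tendsto (fun l : ℕ => Real.log (d (l, m₀ + l)) / l) atTop (nhds 0) := by
  obtain ⟨K, hK, diag_le⟩ := hd.exists_diag_le_add_mul_pow hC hleft hbot m₀
  have start_pos : 0 < d (0, m₀) := ha.trans_le (by simpa only [zero_add] using hlower 0)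
  have diag_le_mul_pow (l : ℕ) : d (l, l + m₀) ≤ (d (0, m₀) + K) * (l + 1) ^ (D + 1) := by
    have one_le : (1 : ℝ) ≤ (l + 1) ^ (D + 1) :=
      one_le_pow₀ (le_add_of_nonneg_left l.cast_nonneg)
    calc d (l, l + m₀) ≤ d (0, m₀) + K * l ^ (D + 1) := diag_le l
      _ ≤ d (0, m₀) * (l + 1) ^ (D + 1) + K * (l + 1) ^ (D + 1) := by
          gcongr
          · exact le_mul_of_one_le_right start_pos.le one_le
          · exact le_add_of_nonneg_right zero_le_one
      _ = (d (0, m₀) + K) * (l + 1) ^ (D + 1) := (add_mul ..).symm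
  refine ⟨⟨_, add_pos_of_pos_of_nonneg start_pos hK, diag_le_mul_pow⟩, ?_⟩
  simpa only [add_comm m₀] using tendsto_log_div_natCast_of_le_mul_pow ha hlower diag_le_mul_pow

/-- If `d̄ ≥ 1` satisfies the master degree equation
(for all `l,m ≥ 1`, stated with shifted indices), and the boundary degree differences
`d̄_{1,m+1} - d̄_{0,m}` and `d̄_{l+1,1} - d̄_{l,0}` are polynomially bounded of degree `D`,
then along each diagonal `d̄_{l,l+m₀}` is polynomially bounded of degree `D+1`, and
consequently `log(d̄_{l,m₀+l})/l → 0`. -/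
theorem stmt7 (db : ℕ × ℕ → ℤ)
    (hrec : ∀ l m : ℕ, db (l + 2, m + 2) =
      db (l + 2, m + 1) + db (l + 1, m + 2) + db (l, m) - db (l + 1, m) - db (l, m + 1))
    (hpos : ∀ l m : ℕ, 1 ≤ db (l, m))
    (C : ℝ) (hC : 0 < C) (D : ℕ)
    (hbound1 : ∀ m : ℕ, |(db (1, m + 1) : ℝ) - (db (0, m) : ℝ)| ≤ C * (m + 1) ^ D)
    (hbound2 : ∀ l : ℕ, |(db (l + 1, 1) : ℝ) - (db (l, 0) : ℝ)| ≤ C * (l + 1) ^ D)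
    (m₀ : ℕ) :
    (∃ C' : ℝ, 0 < C' ∧ ∀ l : ℕ, (db (l, l + m₀) : ℝ) ≤ C' * (l + 1) ^ (D + 1)) ∧
      Tendsto (fun l : ℕ => Real.log ((db (l, m₀ + l) : ℝ)) / (l : ℝ)) atTop (nhds 0) := by
  exact stmt7_general (d := fun p => (db p : ℝ))
    (fun l m => by dsimp only; exact_mod_cast hrec l m) hC.le
    (fun m => le_of_abs_le (hbound1 m)) (fun l => le_of_abs_le (hbound2 l)) one_pos
    (fun l => by exact_mod_cast hpos l (l + m₀))
end

section
/- Let e : ℕ × ℕ → ℤ satisfy e_{l,m} = e_{l-1,m} + e_{l,m-1} + 1 for all l,m ≥ 1, with boundary values e_{l,0} = e_{0,m} = 1 for all l,m ≥ 0. Then e_{l,m} = 2·C(l+m, m) - 1 for all l,m ≥ 0, where C denotes the binomial coefficient. -/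
theorem eq_choose_nsmul_of_pascal_recurrence {M : Type*} [AddMonoid M] {u : ℕ × ℕ → M} {c : M}
    (hrec : ∀ l m : ℕ, u (l + 1, m + 1) = u (l, m + 1) + u (l + 1, m))
    (hl0 : ∀ l : ℕ, u (l, 0) = c) (h0m : ∀ m : ℕ, u (0, m) = c) (l m : ℕ) :
    u (l, m) = (l + m).choose m • c := by
  induction l generalizing m with
  | zero => rw [h0m, zero_add, Nat.choose_self, one_nsmul]
  | succ l ihl =>
    induction m with
    | zero => rw [hl0, Nat.choose_zero_right, one_nsmul]
    | succ m ihm =>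
      have pascal : (l + 1 + (m + 1)).choose (m + 1)
          = (l + (m + 1)).choose (m + 1) + (l + 1 + m).choose m := by
        rw [show l + (m + 1) = l + 1 + m by omega]
        exact (Nat.choose_succ_succ' (l + 1 + m) m).trans (Nat.add_comm _ _)
      rw [hrec, ihl, ihm, pascal, add_nsmul]

theorem stmt12_general {A : Type*} [AddCommGroup A] {e : ℕ × ℕ → A} {b c : A}
    (hrec : ∀ l m : ℕ, e (l + 1, m + 1) = e (l, m + 1) + e (l + 1, m) + b)
    (hl0 : ∀ l : ℕ, e (l, 0) = c) (h0m : ∀ m : ℕ, e (0, m) = c) (l m : ℕ) :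
    e (l, m) = (l + m).choose m • (c + b) - b := by
  -- The constant `-b` solves the recurrence, so `e + b` solves the homogeneous one.
  have shifted_rec (l m : ℕ) :
      e (l + 1, m + 1) + b = (e (l, m + 1) + b) + (e (l + 1, m) + b) := by
    rw [hrec]
    abel
  exact eq_sub_of_add_eq <| eq_choose_nsmul_of_pascal_recurrence (u := fun p ↦ e p + b)
    shifted_rec (fun l ↦ congrArg (· + b) (hl0 l)) (fun m ↦ congrArg (· + b) (h0m m)) l m

/-- If `e` satisfies `e_{l,m} = e_{l-1,m} + e_{l,m-1} + 1` for all
`l,m ≥ 1` (stated with shifted indices) with boundary values `e_{l,0} = e_{0,m} = 1`,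
then `e_{l,m} = 2·C(l+m, m) - 1` for all `l,m ≥ 0`. -/
theorem stmt12 (e : ℕ × ℕ → ℤ)
    (hrec : ∀ l m : ℕ, e (l + 1, m + 1) = e (l, m + 1) + e (l + 1, m) + 1)
    (hl0 : ∀ l : ℕ, e (l, 0) = 1)
    (h0m : ∀ m : ℕ, e (0, m) = 1) :
    ∀ l m : ℕ, e (l, m) = 2 * ((l + m).choose m : ℤ) - 1 := by
  intro l m
  rw [stmt12_general hrec hl0 h0m, nsmul_eq_mul, one_add_one_eq_two, mul_comm]
end

section
/- Let D be a function assigning a rational number D_{l,m} to each pair of positive integers (l,m), satisfying D_{l+1,m+1} = D_{l+1,m} + D_{l,m+1} for all l,m ≥ 1, with boundary values D_{1,m} = m + 2 for all m ≥ 1 and D_{l,1} = 2l + 1 for all l ≥ 1. Then D_{l,m} = ((2l + m)/(l + m)) · C(l+m, l) for all l,m ≥ 1, where C denotes the binomial coefficient. -/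
/-!
The rule `D (l + 1, m + 1) = D (l + 1, m) + D (l, m + 1)` determines an array from its first row and
first column, and it is also the recursion of the multiset coefficient
`Nat.multichoose l m = (l + m - 1).choose m`. So `l.multichoose m • a + m.multichoose l • b`, whose
boundary values are affine, is the solution for affine boundary values, and the closed form follows
from `(l + m) * l.multichoose m = l * (l + m).choose l`.
-/

/-- The reduced degree recurrence, `D_{l+1,m+1} = D_{l+1,m} + D_{l,m+1}`. As the lattice is indexed
by positive integers, entries with a zero index are unconstrained. -/
def IsPascalArray {M : Type*} [Add M] (D : ℕ × ℕ → M) : Prop :=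
  ∀ l m : ℕ, 1 ≤ l → 1 ≤ m → D (l + 1, m + 1) = D (l + 1, m) + D (l, m + 1)

theorem IsPascalArray.eq_of_boundary_eq {M : Type*} [Add M] {D E : ℕ × ℕ → M}
    (hD : IsPascalArray D) (hE : IsPascalArray E)
    (hrow : ∀ m : ℕ, 1 ≤ m → D (1, m) = E (1, m))
    (hcol : ∀ l : ℕ, 1 ≤ l → D (l, 1) = E (l, 1))
    {l m : ℕ} (hl : 1 ≤ l) (hm : 1 ≤ m) : D (l, m) = E (l, m) := by
  induction l, hl using Nat.le_induction generalizing m with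
  | base => exact hrow m hm
  | succ l hl ih_row =>
    induction m, hm using Nat.le_induction with
    | base => exact hcol (l + 1) l.succ_pos
    | succ m hm ih_col => rw [hD l m hl hm, hE l m hl hm, ih_col, ih_row m.succ_pos]

theorem isPascalArray_multichoose {M : Type*} [AddCommMonoid M] (a b : M) :
    IsPascalArray fun p ↦ p.1.multichoose p.2 • a + p.2.multichoose p.1 • b := by
  intro l m _ _
  simp only [Nat.multichoose_succ_succ, add_nsmul]
  abel

theorem IsPascalArray.eq_multichoose {M : Type*} [AddCommMonoid M] {D : ℕ × ℕ → M} {a b : M}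
    (hD : IsPascalArray D)
    (hrow : ∀ m : ℕ, 1 ≤ m → D (1, m) = m • b + a)
    (hcol : ∀ l : ℕ, 1 ≤ l → D (l, 1) = l • a + b)
    {l m : ℕ} (hl : 1 ≤ l) (hm : 1 ≤ m) :
    D (l, m) = l.multichoose m • a + m.multichoose l • b :=
  hD.eq_of_boundary_eq (isPascalArray_multichoose a b)
    (fun m hm ↦ by simp [hrow m hm, add_comm]) (fun l hl ↦ by simp [hcol l hl]) hl hm

theorem add_mul_multichoose (l m : ℕ) :
    (l + m) * l.multichoose m = l * (l + m).choose l := by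
  cases l with
  | zero => cases m <;> simp
  | succ l =>
    calc (l + 1 + m) * (l + 1).multichoose m
        = (l + m + 1) * (l + m).choose l := by
          rw [Nat.multichoose_eq, add_right_comm, Nat.add_sub_cancel, Nat.choose_symm_add]
      _ = (l + 1) * (l + 1 + m).choose (l + 1) := by
          rw [Nat.add_one_mul_choose_eq, add_right_comm, mul_comm]

theorem multichoose_combination_eq_div_mul_choose {K : Type*} [Semifield K] [CharZero K]
    (a b : K) {l m : ℕ} (hlm : l + m ≠ 0) :
    l.multichoose m • a + m.multichoose l • b =
      (a * l + b * m) / (l + m) * ((l + m).choose l : K) := by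
  have hl : ((l : K) + m) * l.multichoose m = l * (l + m).choose l := by
    exact_mod_cast add_mul_multichoose l m
  have hm : ((l : K) + m) * m.multichoose l = m * (l + m).choose l := by
    rw [Nat.choose_symm_add, add_comm l m, add_comm (l : K)]
    exact_mod_cast add_mul_multichoose m l
  have hne : (l : K) + m ≠ 0 := by exact_mod_cast hlm
  rw [div_mul_eq_mul_div, eq_div_iff hne, nsmul_eq_mul, nsmul_eq_mul]
  calc (l.multichoose m * a + m.multichoose l * b) * ((l : K) + m)
      = a * ((l + m) * l.multichoose m) + b * ((l + m) * m.multichoose l) := by ring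
    _ = (a * l + b * m) * (l + m).choose l := by rw [hl, hm]; ring

theorem stmt14_general {K : Type*} [Semifield K] [CharZero K] {D : ℕ × ℕ → K} {a b : K}
    (hD : IsPascalArray D)
    (hrow : ∀ m : ℕ, 1 ≤ m → D (1, m) = b * m + a)
    (hcol : ∀ l : ℕ, 1 ≤ l → D (l, 1) = a * l + b)
    {l m : ℕ} (hl : 1 ≤ l) (hm : 1 ≤ m) :
    D (l, m) = (a * l + b * m) / (l + m) * ((l + m).choose l : K) := by
  rw [← multichoose_combination_eq_div_mul_choose a b (by omega)]
  exact hD.eq_multichoose (fun m hm ↦ by rw [hrow m hm, nsmul_eq_mul'])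
    (fun l hl ↦ by rw [hcol l hl, nsmul_eq_mul']) hl hm

/-- If `D : ℕ × ℕ → ℚ` satisfies `D_{l+1,m+1} = D_{l+1,m} + D_{l,m+1}`
for all `l,m ≥ 1`, with boundary values `D_{1,m} = m + 2` for `m ≥ 1` and
`D_{l,1} = 2l + 1` for `l ≥ 1`, then `D_{l,m} = ((2l+m)/(l+m))·C(l+m,l)` for all
`l,m ≥ 1`. -/
theorem stmt14 (D : ℕ × ℕ → ℚ)
    (hrec : ∀ l m : ℕ, 1 ≤ l → 1 ≤ m → D (l + 1, m + 1) = D (l + 1, m) + D (l, m + 1))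
    (h1m : ∀ m : ℕ, 1 ≤ m → D (1, m) = (m : ℚ) + 2)
    (hl1 : ∀ l : ℕ, 1 ≤ l → D (l, 1) = 2 * (l : ℚ) + 1) :
    ∀ l m : ℕ, 1 ≤ l → 1 ≤ m →
      D (l, m) = ((2 * (l : ℚ) + m) / ((l : ℚ) + m)) * ((l + m).choose l : ℚ) := by
  intro l m hl hm
  simpa using stmt14_general (a := 2) (b := 1) hrec (by simpa using h1m) hl1 hl hm
end

section
/- Let p and q be coprime positive integers, and let d : ℕ → ℂ satisfy the linear recurrence d_{n+2(p+q)} = d_n + d_{n+p+2q} + d_{n+2p+q} − d_{n+q} − d_{n+p} for all n ≥ 0. Then there exist constants a, b, c ∈ ℂ and a function e : ℕ → ℂ that is periodic with period p·q·(p+q), such that d_n = a + b·n + c·n² + e_n for all n ≥ 0. -/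
/-!
In terms of forward differences `Δ_h f n = f (n + h) - f n`, the recurrence says
`Δ_p Δ_q Δ_{p+q} d = 0`, because its characteristic polynomial factors as
`(X ^ p - 1) (X ^ q - 1) (X ^ (p + q) - 1)`.
Dividing each factor by `X - 1` leaves three geometric sums that are pairwise coprime (Euclid's
algorithm on the exponents) and that all divide the geometric sum of length `N = p q (p + q)`. So
their product divides it too, and `Δ_1² Δ_N d = 0`: the increment `d (n + N) - d n` is affine in
`n`. Subtracting from `d` a quadratic polynomial with the same increment leaves an `N`-periodic
remainder.
-/

open Finset Polynomial fwdDiff fwdDiff_aux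

section GeomSum

variable {R : Type*}

lemma geom_sum_range_add [Semiring R] (x : R) (m n : ℕ) :
    ∑ i ∈ range (m + n), x ^ i = ∑ i ∈ range m, x ^ i + x ^ m * ∑ i ∈ range n, x ^ i := by
  simp only [sum_range_add, pow_add, mul_sum]

lemma geom_sum_range_mul [Semiring R] (x : R) (m n : ℕ) :
    ∑ i ∈ range (m * n), x ^ i = (∑ i ∈ range m, x ^ i) * ∑ j ∈ range n, (x ^ m) ^ j := by
  induction n with
  | zero => simp
  | succ n ih =>
    have hcomm : Commute (x ^ (m * n)) (∑ i ∈ range m, x ^ i) :=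
      Commute.sum_right _ _ _ fun i _ ↦ Commute.pow_pow_self x _ i
    rw [mul_add_one, geom_sum_range_add, ih, sum_range_succ, mul_add, hcomm.eq, pow_mul]

lemma geom_sum_dvd_geom_sum [Semiring R] (x : R) {m n : ℕ} (h : m ∣ n) :
    ∑ i ∈ range m, x ^ i ∣ ∑ i ∈ range n, x ^ i := by
  obtain ⟨k, rfl⟩ := h
  exact ⟨_, geom_sum_range_mul x m k⟩

lemma isCoprime_geom_sum [CommRing R] (x : R) {m n : ℕ} (h : m.Coprime n) :
    IsCoprime (∑ i ∈ range m, x ^ i) (∑ i ∈ range n, x ^ i) := by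
  induction m, n using Nat.gcd.induction with
  | H0 n =>
    obtain rfl : n = 1 := by simpa using h
    simpa only [geom_sum_one] using isCoprime_one_right
  | H1 m n _ ih =>
    have hmod : (n % m).Coprime m := by rwa [Nat.Coprime, ← Nat.gcd_rec]
    have hdiv : ∑ i ∈ range n, x ^ i = ∑ i ∈ range (n % m), x ^ i +
        (∑ i ∈ range m, x ^ i) * (x ^ (n % m) * ∑ j ∈ range (n / m), (x ^ m) ^ j) := by
      conv_lhs => rw [← Nat.mod_add_div n m, geom_sum_range_add, geom_sum_range_mul]
      ring
    rw [hdiv]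
    exact (ih hmod).symm.add_mul_left_right _

lemma pow_sub_one_mul_dvd_sub_one_sq_mul [CommRing R] (x : R) {p q : ℕ} (hpq : p.Coprime q) :
    (x ^ p - 1) * (x ^ q - 1) * (x ^ (p + q) - 1) ∣
      (x - 1) ^ 2 * (x ^ (p * q * (p + q)) - 1) := by
  have hp_add : p.Coprime (p + q) := by simpa using hpq
  have hq_add : q.Coprime (p + q) := by simpa using hpq.symm
  have hdvd : (∑ i ∈ range p, x ^ i) * (∑ i ∈ range q, x ^ i) * (∑ i ∈ range (p + q), x ^ i) ∣
      ∑ i ∈ range (p * q * (p + q)), x ^ i :=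
    ((isCoprime_geom_sum x hp_add).mul_left (isCoprime_geom_sum x hq_add)).mul_dvd
      ((isCoprime_geom_sum x hpq).mul_dvd
        (geom_sum_dvd_geom_sum x ((dvd_mul_right p q).mul_right _))
        (geom_sum_dvd_geom_sum x ((dvd_mul_left q p).mul_right _)))
      (geom_sum_dvd_geom_sum x (dvd_mul_left _ _))
  simp only [← geom_sum_mul]
  convert mul_dvd_mul_left ((x - 1) ^ 3) hdvd using 1 <;> ring

end GeomSum

section FwdDiff

variable {A M : Type*} [AddCommMonoid A] [AddCommGroup M]

lemma fwdDiff_eq_zero_iff_periodic {h : A} {f : A → M} :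
    Δ_[h] f = 0 ↔ Function.Periodic f h := by
  simp [funext_iff, fwdDiff, Function.Periodic, sub_eq_zero]

lemma aeval_shiftₗ_X_pow_sub_one (h : A) (k : ℕ) :
    aeval (shiftₗ A M h) (X ^ k - 1 : ℤ[X]) = fwdDiffₗ A M (k • h) := by
  ext f y
  simp [shiftₗ_pow_apply, fwdDiff]

lemma fwdDiff_iter_two_fwdDiff_eq_zero {p q : ℕ} (hpq : p.Coprime q) {h : A} {f : A → M}
    (hf : Δ_[p • h] (Δ_[q • h] (Δ_[(p + q) • h] f)) = 0) :
    (Δ_[h])^[2] (Δ_[(p * q * (p + q)) • h] f) = 0 := by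
  obtain ⟨r, hr⟩ := pow_sub_one_mul_dvd_sub_one_sq_mul (X : ℤ[X]) hpq
  have hsub : aeval (shiftₗ A M h) (X - 1 : ℤ[X]) = fwdDiffₗ A M h := by
    simpa using aeval_shiftₗ_X_pow_sub_one (M := M) h 1
  have happly := congrArg (fun P ↦ aeval (shiftₗ A M h) P f) (hr.trans (mul_comm _ r))
  simpa only [map_mul, map_pow, hsub, aeval_shiftₗ_X_pow_sub_one, Module.End.mul_apply,
    Module.End.pow_apply, coe_fwdDiffₗ, fwdDiffₗ_apply, hf, map_zero] using happly

lemma apply_add_nsmul_eq_sum_of_fwdDiff_iter_eq_zero {h : A} {f : A → M} {k : ℕ}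
    (hf : (Δ_[h])^[k] f = 0) (n : ℕ) (y : A) :
    f (y + n • h) = ∑ j ∈ range k, n.choose j • (Δ_[h])^[j] f y := by
  have hvanish (j : ℕ) (hj : k ≤ j) : (Δ_[h])^[j] f = 0 := by
    obtain ⟨i, rfl⟩ := Nat.exists_eq_add_of_le' hj
    rw [Function.iterate_add_apply, hf, ← coe_fwdDiffₗ_pow, map_zero]
  calc f (y + n • h) = ∑ j ∈ range (n + 1), n.choose j • (Δ_[h])^[j] f y :=
        shift_eq_sum_fwdDiff_iter h f n y
    _ = ∑ j ∈ range (max (n + 1) k), n.choose j • (Δ_[h])^[j] f y :=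
        sum_subset (range_mono (le_max_left _ _)) fun j _ hj ↦ by
          rw [Nat.choose_eq_zero_of_lt (by simpa using hj), zero_smul]
    _ = ∑ j ∈ range k, n.choose j • (Δ_[h])^[j] f y :=
        (sum_subset (range_mono (le_max_right _ _)) fun j _ hj ↦ by
          rw [hvanish j (by simpa using hj), Pi.zero_apply, smul_zero]).symm

lemma fwdDiff_fwdDiff_fwdDiff_add_apply (h k : A) (f : A → M) (y : A) :
    Δ_[h] (Δ_[k] (Δ_[h + k] f)) y =
      f (y + 2 • (h + k)) - f (y + h + 2 • k) - f (y + 2 • h + k) + f (y + k) + f (y + h)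
        - f y := by
  have hhk : y + h + k + (h + k) = y + 2 • (h + k) := by abel
  have hk : y + k + (h + k) = y + h + 2 • k := by abel
  have hh : y + h + (h + k) = y + 2 • h + k := by abel
  simp only [fwdDiff, hhk, hk, hh, ← add_assoc y h k]
  abel

end FwdDiff

section Quadratic

variable {M : Type*} [AddCommGroup M] [Module ℚ M]

lemma exists_fwdDiff_quadratic_eq {N : ℕ} (hN : N ≠ 0) (α β : M) :
    ∃ b c : M, ∀ n : ℕ, Δ_[N] (fun m : ℕ ↦ m • b + m ^ 2 • c) n = α + n • β := by
  have hN' : (N : ℚ) ≠ 0 := by exact_mod_cast hN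
  refine ⟨(N : ℚ)⁻¹ • α - (2⁻¹ : ℚ) • β, (2 * N : ℚ)⁻¹ • β, fun n ↦ ?_⟩
  simp only [fwdDiff, ← Nat.cast_smul_eq_nsmul ℚ]
  match_scalars <;> field_simp <;> ring

lemma exists_eq_quadratic_add_periodic {N : ℕ} (hN : N ≠ 0) {d : ℕ → M}
    (hd : (Δ_[1])^[2] (Δ_[N] d) = 0) :
    ∃ (b c : M) (e : ℕ → M), Function.Periodic e N ∧ ∀ n, d n = n • b + n ^ 2 • c + e n := by
  have haffine (n : ℕ) : Δ_[N] d n = Δ_[N] d 0 + n • Δ_[1] (Δ_[N] d) 0 := by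
    simpa [sum_range_succ] using apply_add_nsmul_eq_sum_of_fwdDiff_iter_eq_zero hd n 0
  obtain ⟨b, c, hbc⟩ := exists_fwdDiff_quadratic_eq hN (Δ_[N] d 0) (Δ_[1] (Δ_[N] d) 0)
  refine ⟨b, c, d - fun n ↦ n • b + n ^ 2 • c, ?_, fun n ↦ by simp⟩
  rw [← fwdDiff_eq_zero_iff_periodic, ← coe_fwdDiffₗ, map_sub, sub_eq_zero]
  exact funext fun n ↦ (haffine n).trans (hbc n).symm

theorem stmt17_general {p q : ℕ} (hp : 0 < p) (hq : 0 < q) (hpq : p.Coprime q) {d : ℕ → M}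
    (hrec : ∀ n, d (n + 2 * (p + q)) =
      d n + d (n + p + 2 * q) + d (n + 2 * p + q) - d (n + q) - d (n + p)) :
    ∃ (b c : M) (e : ℕ → M), Function.Periodic e (p * q * (p + q)) ∧
      ∀ n, d n = n • b + n ^ 2 • c + e n := by
  have hΔ : Δ_[p] (Δ_[q] (Δ_[p + q] d)) = 0 := by
    ext n
    simp only [fwdDiff_fwdDiff_fwdDiff_add_apply, smul_eq_mul, hrec, Pi.zero_apply]
    abel
  have hΔN := fwdDiff_iter_two_fwdDiff_eq_zero (h := 1) (f := d) hpq (by simpa using hΔ)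
  rw [smul_eq_mul, mul_one] at hΔN
  exact exists_eq_quadratic_add_periodic (by positivity) hΔN

end Quadratic

/-- Let `p, q` be coprime positive integers and `d : ℕ → ℂ` satisfy
`d_{n+2(p+q)} = d_n + d_{n+p+2q} + d_{n+2p+q} − d_{n+q} − d_{n+p}` for all `n ≥ 0`.
Then there are constants `a, b, c ∈ ℂ` and a `p·q·(p+q)`-periodic function
`e : ℕ → ℂ` with `d_n = a + b·n + c·n² + e_n` for all `n`. -/
theorem stmt17 (p q : ℕ) (hp : 0 < p) (hq : 0 < q) (hpq : Nat.Coprime p q)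
    (d : ℕ → ℂ)
    (hrec : ∀ n : ℕ, d (n + 2 * (p + q)) =
      d n + d (n + p + 2 * q) + d (n + 2 * p + q) - d (n + q) - d (n + p)) :
    ∃ (a b c : ℂ) (e : ℕ → ℂ),
      (∀ n : ℕ, e (n + p * q * (p + q)) = e n) ∧
      ∀ n : ℕ, d n = a + b * (n : ℂ) + c * (n : ℂ) ^ 2 + e n := by
  obtain ⟨b, c, e, he, hd⟩ := stmt17_general hp hq hpq hrec
  exact ⟨0, b, c, e, he, fun n ↦ by simp [hd, mul_comm]⟩
end
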